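/- arXiv:1306.0319 — 2 statements merged into one kernel-verified Lean document; each statement's English description precedes it below -/
import Mathlib

section
/- Suppose n ≥ 3 and V ∈ B_q for some q > n/2. Then there exist constants C > 0 and k₀ ≥ 1 such that for all x, y ∈ ℝⁿ one has C⁻¹ ρ(x) (1 + |x−y|/ρ(x))^{−k₀} ≤ ρ(y) ≤ C ρ(x) (1 + |x−y|/ρ(x))^{k₀/(k₀+1)}. -/
open MeasureTheory Metric Set Filter

noncomputable section

/-- `ℝⁿ` as Euclidean space. -/
abbrev En (n : ℕ) := EuclideanSpace ℝ (Fin n)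

/-- The critical radius function `ρ(x)` associated to a potential `V`. -/
def critRad (n : ℕ) (V : En n → ℝ) (x : En n) : ℝ :=
  sSup {r : ℝ | 0 < r ∧ r ^ (2 - (n : ℝ)) * ∫ y in ball x r, V y ≤ 1}

/-- `V` belongs to the reverse Hölder class `B_q` with constant `C`. -/
def ReverseHolder (n : ℕ) (V : En n → ℝ) (q C : ℝ) : Prop :=
  (∀ x, 0 ≤ V x) ∧ (∃ x, V x ≠ 0) ∧
  (∀ (x : En n) (r : ℝ), 0 < r → IntegrableOn (fun y => V y ^ q) (ball x r) volume) ∧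
  (∀ (x : En n) (r : ℝ), 0 < r →
    ((volume (ball x r)).toReal⁻¹ * ∫ y in ball x r, V y ^ q) ^ (1 / q)
      ≤ C * ((volume (ball x r)).toReal⁻¹ * ∫ y in ball x r, V y))

/-- Upper bound deduced from the lower bound, pure algebra. -/
lemma upper_of_lower (a b d C k : ℝ) (ha : 0 < a) (hb : 0 < b) (hd : 0 ≤ d) (hC : 1 ≤ C)
    (hk : 1 ≤ k) (h : C⁻¹ * b * (1 + d / b) ^ (-k) ≤ a) :
    b ≤ C * 2 ^ k * a * (1 + d / a) ^ (k / (k + 1)) := by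
  have hC0 : 0 < C := by linarith
  have h2k : (1 : ℝ) ≤ 2 ^ k := Real.one_le_rpow (by norm_num) (by linarith)
  have ht : 1 ≤ 1 + d / a := by have := div_nonneg hd ha.le; linarith
  have hw : 0 < 1 + d / b := by have := div_nonneg hd hb.le; linarith
  have h1 : b ≤ C * (1 + d / b) ^ k * a := by
    rw [Real.rpow_neg hw.le] at h
    have hp : 0 < (1 + d / b) ^ k := Real.rpow_pos_of_pos hw k
    calc b = C * (1 + d / b) ^ k * (C⁻¹ * b * ((1 + d / b) ^ k)⁻¹) := by field_simp
      _ ≤ _ := by gcongr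
  have hD : 1 ≤ C * 2 ^ k := by nlinarith
  rcases le_or_gt d b with hdb | hdb
  · have h3 : (1 + d / b) ^ k ≤ 2 ^ k := by
      apply Real.rpow_le_rpow hw.le _ (by linarith)
      have : d / b ≤ 1 := (div_le_one hb).2 hdb
      linarith
    have h4 : 1 ≤ (1 + d / a) ^ (k / (k + 1)) := Real.one_le_rpow ht (by positivity)
    calc b ≤ C * (1 + d / b) ^ k * a := h1
      _ ≤ C * 2 ^ k * a := by gcongr
      _ ≤ _ := le_mul_of_one_le_right (by positivity) h4
  · have hd0 : 0 < d := hb.trans hdb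
    have h3 : (1 + d / b) ^ k ≤ 2 ^ k * (d / b) ^ k := by
      rw [← Real.mul_rpow (by norm_num) (by positivity)]
      apply Real.rpow_le_rpow hw.le _ (by linarith)
      have : 1 ≤ d / b := (one_le_div hb).2 hdb.le
      linarith
    have h5 : b / a ≤ C * 2 ^ k * (d / b) ^ k := by
      rw [div_le_iff₀ ha]
      calc b ≤ C * (1 + d / b) ^ k * a := h1
        _ ≤ C * (2 ^ k * (d / b) ^ k) * a := by gcongr
        _ = _ := by ring
    have h6 : (b / a) ^ (k + 1) ≤ C * 2 ^ k * (1 + d / a) ^ k := by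
      rw [Real.rpow_add_one (by positivity)]
      calc (b / a) ^ k * (b / a) ≤ (b / a) ^ k * (C * 2 ^ k * (d / b) ^ k) := by gcongr
        _ = C * 2 ^ k * ((b / a) ^ k * (d / b) ^ k) := by ring
        _ = C * 2 ^ k * (d / a) ^ k := by
          rw [← Real.mul_rpow (by positivity) (by positivity)]
          have : b / a * (d / b) = d / a := by field_simp
          rw [this]
        _ ≤ _ := by
          gcongr
          linarith
    have h7 : b / a ≤ (C * 2 ^ k * (1 + d / a) ^ k) ^ (1 / (k + 1)) := by
      have := Real.rpow_le_rpow (by positivity) h6 (z := 1 / (k + 1)) (by positivity)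
      rwa [← Real.rpow_mul (by positivity), mul_one_div_cancel (by positivity),
        Real.rpow_one] at this
    rw [Real.mul_rpow (by positivity) (by positivity), ← Real.rpow_mul (by positivity),
      mul_one_div] at h7
    have h8 : (C * 2 ^ k) ^ (1 / (k + 1)) ≤ C * 2 ^ k := by
      apply Real.rpow_le_self_of_one_le hD
      rw [div_le_one (by positivity)]; linarith
    rw [div_le_iff₀ ha] at h7
    calc b ≤ _ := h7
      _ ≤ (C * 2 ^ k) * (1 + d / a) ^ (k / (k + 1)) * a := by gcongr
      _ = _ := by ring

/-- Abstract form of the theorem. -/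
lemma abstract_main {X : Type*} [PseudoMetricSpace X] (F : X → ℝ → ℝ) (ρ : X → ℝ) (a δ μ C₀ C₁ : ℝ)
    (ha : a ≤ 0) (hδ : 0 < δ) (hμ : 0 ≤ μ) (hC₀ : 0 < C₀) (hC₁ : 0 < C₁)
    (hF0 : ∀ x r, 0 ≤ F x r)
    (hmono : ∀ x y r s, dist x y + r ≤ s → F x r ≤ F y s)
    (hdec : ∀ x r R, 0 < r → r ≤ R → r ^ a * F x r ≤ C₀ * (r / R) ^ δ * (R ^ a * F x R))
    (hgr : ∀ x r R, 0 < r → r ≤ R → F x R ≤ C₁ * (R / r) ^ μ * F x r)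
    (hρ : ∀ x, ρ x = sSup {r : ℝ | 0 < r ∧ r ^ a * F x r ≤ 1})
    (hpos : ∃ x, ∃ r, 0 < r ∧ 0 < F x r) :
    ∃ C k₀ : ℝ, 0 < C ∧ 1 ≤ k₀ ∧ ∀ x y : X,
      C⁻¹ * ρ x * (1 + dist x y / ρ x) ^ (-k₀) ≤ ρ y ∧
      ρ y ≤ C * ρ x * (1 + dist x y / ρ x) ^ (k₀ / (k₀ + 1)) := by
  have hposall : ∀ y, ∃ r, 0 < r ∧ 0 < F y r := by
    intro y
    obtain ⟨x, r, hr, hF⟩ := hpos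
    exact ⟨dist x y + r, by positivity, hF.trans_le (hmono _ _ _ _ le_rfl)⟩
  have hbdd : ∀ x, BddAbove {r : ℝ | 0 < r ∧ r ^ a * F x r ≤ 1} := by
    intro x
    obtain ⟨r, hr, hF⟩ := hposall x
    set A := r ^ a * F x r with hA
    have hA0 : 0 < A := by positivity
    refine ⟨max r (r * (C₀ / A) ^ (1 / δ)), ?_⟩
    rintro R ⟨hR, hR1⟩
    rcases le_total R r with h | h
    · exact le_max_of_le_left h
    · apply le_max_of_le_right
      have h1 := hdec x r R hr h
      have h2 : A ≤ C₀ * (r / R) ^ δ := by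
        refine h1.trans ?_
        exact mul_le_of_le_one_right (by positivity) hR1
      have h3 : (R / r) ^ δ ≤ C₀ / A := by
        rw [le_div_iff₀ hA0]
        calc (R / r) ^ δ * A ≤ (R / r) ^ δ * (C₀ * (r / R) ^ δ) := by gcongr
          _ = C₀ * ((R / r) ^ δ * (r / R) ^ δ) := by ring
          _ = C₀ := by
            rw [← Real.mul_rpow (by positivity) (by positivity)]
            have : R / r * (r / R) = 1 := by field_simp
            rw [this, Real.one_rpow, mul_one]
      have := Real.rpow_le_rpow (by positivity) h3 (z := 1 / δ) (by positivity)
      rw [← Real.rpow_mul (by positivity), mul_one_div_cancel hδ.ne', Real.rpow_one,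
        div_le_iff₀ hr] at this
      linarith
  have hle : ∀ x r, 0 < r → r ^ a * F x r ≤ 1 → r ≤ ρ x := by
    intro x r h1 h2
    rw [hρ]
    exact le_csSup (hbdd x) ⟨h1, h2⟩
  have hρpos : ∀ x, 0 < ρ x := by
    intro x
    set B := C₀ * ((1 : ℝ) ^ a * F x 1) + 1 with hB
    have hB1 : 1 ≤ B := by
      have := hF0 x 1
      simp only [hB, Real.one_rpow]
      nlinarith
    have hB0 : 0 < B := by linarith
    have hr : 0 < (B⁻¹) ^ (1 / δ) := by positivity
    refine hr.trans_le (hle x _ hr ?_)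
    have hr1 : (B⁻¹) ^ (1 / δ) ≤ 1 :=
      Real.rpow_le_one (by positivity) (inv_le_one_of_one_le₀ hB1) (by positivity)
    refine (hdec x _ 1 hr hr1).trans ?_
    rw [div_one, ← Real.rpow_mul (by positivity), one_div_mul_cancel hδ.ne', Real.rpow_one]
    calc C₀ * B⁻¹ * (1 ^ a * F x 1) = (B - 1) * B⁻¹ := by rw [hB]; ring
      _ ≤ B * B⁻¹ := by gcongr; linarith
      _ = 1 := mul_inv_cancel₀ hB0.ne'
  set K := max 1 (C₀ * C₁ * 4 ^ μ) with hK
  have hK1 : 1 ≤ K := le_max_left _ _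
  have hK0 : 0 < K := by linarith
  set k := max 1 (μ / δ) with hk
  have hk1 : 1 ≤ k := le_max_left _ _
  set C := K ^ (1 / δ) with hC
  have hC1 : 1 ≤ C := Real.one_le_rpow hK1 (by positivity)
  have hC0 : 0 < C := by linarith
  have lower : ∀ x y, C⁻¹ * ρ x * (1 + dist x y / ρ x) ^ (-k) ≤ ρ y := by
    intro x y
    have hx := hρpos x
    set d := dist x y with hd
    have hd0 : 0 ≤ d := dist_nonneg
    have ht1 : 1 ≤ 1 + d / ρ x := by have := div_nonneg hd0 hx.le; linarith
    set t := 1 + d / ρ x with ht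
    have ht0 : 0 < t := by linarith
    obtain ⟨r', ⟨hr'0, hr'1⟩, hr'2⟩ : ∃ r' ∈ {r : ℝ | 0 < r ∧ r ^ a * F x r ≤ 1}, ρ x / 2 < r' := by
      apply exists_lt_of_lt_csSup
      · by_contra hne
        rw [Set.not_nonempty_iff_eq_empty] at hne
        have := hρ x
        rw [hne, Real.sSup_empty] at this
        linarith
      · rw [← hρ]; linarith
    have hr'3 : r' ≤ ρ x := hle x r' hr'0 hr'1
    set R := ρ x + d with hR
    have hR0 : 0 < R := by linarith
    have hRt : R = ρ x * t := by rw [hR, ht]; field_simp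
    have hKt : 1 ≤ K * t ^ μ := by
      have := Real.one_le_rpow ht1 hμ
      nlinarith
    have hKt0 : 0 < K * t ^ μ := by linarith
    set s := ((K * t ^ μ)⁻¹) ^ (1 / δ) with hs
    have hs0 : 0 < s := by positivity
    have hs1 : s ≤ 1 := Real.rpow_le_one (by positivity) (inv_le_one_of_one_le₀ hKt) (by positivity)
    have hsδ : s ^ δ = (K * t ^ μ)⁻¹ := by
      rw [hs, ← Real.rpow_mul (by positivity), one_div_mul_cancel hδ.ne', Real.rpow_one]
    have hFy : F y R ≤ F x (2 * R) := by
      apply hmono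
      rw [dist_comm]
      linarith
    have hF2 : F x (2 * R) ≤ C₁ * (2 * R / r') ^ μ * F x r' := hgr _ _ _ hr'0 (by linarith)
    have hq : (2 * R / r') ^ μ ≤ 4 ^ μ * t ^ μ := by
      rw [← Real.mul_rpow (by norm_num) ht0.le]
      apply Real.rpow_le_rpow (by positivity) _ hμ
      rw [div_le_iff₀ hr'0, hRt]
      nlinarith
    have hRa : R ^ a * F x r' ≤ 1 := by
      refine le_trans ?_ hr'1
      apply mul_le_mul_of_nonneg_right _ (hF0 _ _)
      exact Real.rpow_le_rpow_of_nonpos hr'0 (by linarith) ha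
    have hmain : R * s ≤ ρ y := by
      apply hle y _ (by positivity)
      refine (hdec y (R * s) R (by positivity) (by nlinarith)).trans ?_
      rw [mul_div_cancel_left₀ _ hR0.ne', hsδ]
      have e1 : R ^ a * F y R ≤ C₁ * (4 ^ μ * t ^ μ) := by
        calc R ^ a * F y R ≤ R ^ a * (C₁ * (2 * R / r') ^ μ * F x r') := by
              gcongr; exact hFy.trans hF2
          _ = C₁ * (2 * R / r') ^ μ * (R ^ a * F x r') := by ring
          _ ≤ C₁ * (2 * R / r') ^ μ * 1 := by gcongr
          _ ≤ C₁ * (4 ^ μ * t ^ μ) := by rw [mul_one]; gcongr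
      calc C₀ * (K * t ^ μ)⁻¹ * (R ^ a * F y R) ≤ C₀ * (K * t ^ μ)⁻¹ * (C₁ * (4 ^ μ * t ^ μ)) := by
            gcongr
        _ = (C₀ * C₁ * 4 ^ μ) * t ^ μ * (K * t ^ μ)⁻¹ := by ring
        _ ≤ K * t ^ μ * (K * t ^ μ)⁻¹ := by
            gcongr
            exact le_max_right _ _
        _ = 1 := mul_inv_cancel₀ hKt0.ne'
    refine le_trans ?_ hmain
    have hs' : s = C⁻¹ * t ^ (-(μ / δ)) := by
      rw [hs, Real.inv_rpow hKt0.le, Real.mul_rpow hK0.le (by positivity), ← Real.rpow_mul ht0.le,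
        Real.rpow_neg ht0.le, mul_inv, mul_one_div]
    rw [hs', hRt]
    have e2 : t ^ (-k) ≤ t ^ (-(μ / δ)) :=
      Real.rpow_le_rpow_of_exponent_le ht1 (neg_le_neg (le_max_right _ _))
    calc C⁻¹ * ρ x * t ^ (-k) ≤ C⁻¹ * ρ x * t ^ (-(μ / δ)) := by gcongr
      _ ≤ C⁻¹ * ρ x * t ^ (-(μ / δ)) * t := le_mul_of_one_le_right (by positivity) ht1
      _ = _ := by ring
  have h2k : (1 : ℝ) ≤ 2 ^ k := Real.one_le_rpow (by norm_num) (by linarith)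
  refine ⟨C * 2 ^ k, k, by positivity, hk1, fun x y => ⟨?_, ?_⟩⟩
  · refine le_trans ?_ (lower x y)
    have hx := hρpos x
    have : 0 ≤ dist x y := dist_nonneg
    gcongr
    exact le_mul_of_one_le_right hC0.le h2k
  · apply upper_of_lower _ _ _ _ _ (hρpos x) (hρpos y) dist_nonneg hC1 hk1
    rw [dist_comm]
    exact lower y x

/-- Iterating a shell estimate gives polynomial growth. -/
lemma growth_of_shell (f : ℝ → ℝ) (θ : ℝ) (h0 : 0 < θ) (h1 : θ < 1)
    (hf0 : ∀ r, 0 ≤ f r) (hm : Monotone f) (hf : ∀ R, 0 < R → f R ≤ 2 * f (θ * R)) (r R : ℝ) (hr : 0 < r)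
    (hrR : r ≤ R) : f R ≤ 2 * (R / r) ^ (Real.log 2 / Real.log θ⁻¹) * f r := by
  have hit : ∀ m : ℕ, ∀ R, 0 < R → f R ≤ 2 ^ m * f (θ ^ m * R) := by
    intro m
    induction m with
    | zero => intro R _; simp
    | succ m ih =>
      intro R hR
      calc f R ≤ 2 ^ m * f (θ ^ m * R) := ih R hR
        _ ≤ 2 ^ m * (2 * f (θ * (θ ^ m * R))) := by gcongr; exact hf _ (by positivity)
        _ = _ := by rw [pow_succ, pow_succ]; ring_nf
  have hR : 0 < R := hr.trans_le hrR
  obtain ⟨m, hm1, hm2⟩ := exists_nat_pow_near_of_lt_one (x := r / R) (y := θ) (by positivity)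
    ((div_le_one hR).2 hrR) h0 h1
  rw [lt_div_iff₀ hR] at hm1
  have hl : 0 < Real.log θ⁻¹ := Real.log_pos ((one_lt_inv₀ h0).2 h1)
  have hl2 : 0 < Real.log 2 := Real.log_pos (by norm_num)
  have h2m : (2 : ℝ) ^ m ≤ (R / r) ^ (Real.log 2 / Real.log θ⁻¹) := by
    have e : (2 : ℝ) ^ m = ((θ⁻¹) ^ m) ^ (Real.log 2 / Real.log θ⁻¹) := by
      rw [← Real.rpow_natCast (θ⁻¹), ← Real.rpow_mul (by positivity), mul_comm,
        Real.rpow_mul (by positivity), Real.rpow_natCast]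
      congr 1
      rw [Real.rpow_def_of_pos (by positivity), mul_div_cancel₀ _ hl.ne', Real.exp_log (by norm_num)]
    rw [e]
    apply Real.rpow_le_rpow (by positivity) _ (by positivity)
    rw [inv_pow, ← inv_div]
    exact inv_anti₀ (by positivity) hm2
  calc f R ≤ 2 ^ (m + 1) * f (θ ^ (m + 1) * R) := hit _ R hR
    _ ≤ 2 ^ (m + 1) * f r := by gcongr; exact hm hm1.le
    _ = 2 * 2 ^ m * f r := by rw [pow_succ]; ring
    _ ≤ _ := by
      have := hf0 r
      gcongr

/-- `V` is in `L^q` on balls. -/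
lemma memLp_ball {n : ℕ} {V : En n → ℝ} {q C₀ : ℝ} (hq : 1 < q) (hV : ReverseHolder n V q C₀)
    (x : En n) (r : ℝ) : MemLp V (ENNReal.ofReal q) (volume.restrict (ball x r)) := by
  obtain ⟨h0, -, hint, -⟩ := hV
  rcases le_or_gt r 0 with hr | hr
  · rw [ball_eq_empty.2 hr]; simp
  have hi := hint x r hr
  have hm : AEStronglyMeasurable V (volume.restrict (ball x r)) := by
    have h1 := (hi.aestronglyMeasurable.aemeasurable.pow_const (1 / q)).aestronglyMeasurable
    refine h1.congr (Eventually.of_forall fun y => ?_)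
    simp only
    rw [← Real.rpow_mul (h0 y), mul_one_div_cancel (by positivity), Real.rpow_one]
  rw [← integrable_norm_rpow_iff hm (by simp; linarith) (by simp),
    ENNReal.toReal_ofReal (by linarith)]
  refine hi.congr (Eventually.of_forall fun y => ?_)
  simp only
  rw [Real.norm_of_nonneg (h0 y)]

lemma integrableOn_ball {n : ℕ} {V : En n → ℝ} {q C₀ : ℝ} (hq : 1 < q) (hV : ReverseHolder n V q C₀)
    (x : En n) (r : ℝ) : IntegrableOn V (ball x r) := by
  have : IsFiniteMeasure (volume.restrict (ball x r)) :=
    ⟨by rw [Measure.restrict_apply_univ]; exact measure_ball_lt_top⟩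
  exact (memLp_ball hq hV x r).integrable (by rw [ENNReal.one_le_ofReal]; exact hq.le)

/-- The `A_∞` type estimate. -/
lemma subset_est {n : ℕ} {V : En n → ℝ} {q C₀ : ℝ} (hq : 1 < q) (hV : ReverseHolder n V q C₀)
    (x : En n) (R : ℝ) (hR : 0 < R) (E : Set (En n)) (hEB : E ⊆ ball x R) :
    ∫ y in E, V y ≤ C₀ * (volume.real E / volume.real (ball x R)) ^ (1 - 1 / q) *
      ∫ y in ball x R, V y := by
  have hL := memLp_ball hq hV x R
  obtain ⟨h0, -, hint, hrh⟩ := hV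
  have hBpos : 0 < volume.real (ball x R) :=
    ENNReal.toReal_pos (measure_ball_pos _ _ hR).ne' measure_ball_lt_top.ne
  have hfin : IsFiniteMeasure (volume.restrict E) :=
    ⟨by rw [Measure.restrict_apply_univ]; exact (measure_mono hEB).trans_lt measure_ball_lt_top⟩
  have hpq : q.HolderConjugate (q.conjExponent) := Real.HolderConjugate.conjExponent hq
  have e1 : 1 / q.conjExponent = 1 - 1 / q := by
    have := hpq.inv_add_inv_eq_one
    rw [one_div, one_div]; linarith
  have H := integral_mul_le_Lp_mul_Lq_of_nonneg (μ := volume.restrict E) hpq (f := V)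
    (g := fun _ => (1 : ℝ)) (Eventually.of_forall h0) (Eventually.of_forall fun _ => zero_le_one)
    (hL.mono_measure (Measure.restrict_mono hEB le_rfl)) (memLp_const 1)
  simp only [mul_one, Real.one_rpow, e1] at H
  rw [setIntegral_const, smul_eq_mul, mul_one] at H
  have hr := hrh x R hR
  change ((volume.real (ball x R))⁻¹ * _) ^ (1 / q) ≤ C₀ * ((volume.real (ball x R))⁻¹ * _) at hr
  set b := volume.real (ball x R)
  set e := volume.real E
  have he : 0 ≤ e := measureReal_nonneg
  set I := ∫ y in ball x R, V y ^ q
  set F := ∫ y in ball x R, V y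
  have hI0 : 0 ≤ I := integral_nonneg fun y => Real.rpow_nonneg (h0 y) _
  have hEI : ∫ y in E, V y ^ q ≤ I :=
    setIntegral_mono_set (hint x R hR) (Eventually.of_forall fun y => Real.rpow_nonneg (h0 y) _)
      hEB.eventuallyLE
  have hE0 : 0 ≤ ∫ y in E, V y ^ q := integral_nonneg fun y => Real.rpow_nonneg (h0 y) _
  have hIq : I ^ (1 / q) ≤ b ^ (1 / q) * (C₀ * (b⁻¹ * F)) := by
    calc I ^ (1 / q) = (b * (b⁻¹ * I)) ^ (1 / q) := by rw [mul_inv_cancel_left₀ hBpos.ne']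
      _ = b ^ (1 / q) * (b⁻¹ * I) ^ (1 / q) := Real.mul_rpow hBpos.le (by positivity)
      _ ≤ _ := by gcongr
  calc ∫ y in E, V y ≤ _ := H
    _ ≤ I ^ (1 / q) * e ^ (1 - 1 / q) := by gcongr
    _ ≤ (b ^ (1 / q) * (C₀ * (b⁻¹ * F))) * e ^ (1 - 1 / q) := by gcongr
    _ = _ := by
      rw [Real.div_rpow he hBpos.le, Real.rpow_sub hBpos, Real.rpow_one]
      have : 0 < b ^ (1 / q) := by positivity
      field_simp

lemma vol_ball {n : ℕ} (hn : 3 ≤ n) (x : En n) (r : ℝ) (hr : 0 ≤ r) :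
    volume.real (ball x r) = r ^ n * volume.real (ball (0 : En n) 1) := by
  have : Nonempty (Fin n) := ⟨⟨0, by omega⟩⟩
  rw [measureReal_def, Measure.addHaar_ball _ _ hr, ENNReal.toReal_mul,
    ENNReal.toReal_ofReal (by positivity)]
  simp [measureReal_def]

theorem stmt_0 (n : ℕ) (hn : 3 ≤ n) (V : En n → ℝ) (q C₀ : ℝ)
    (hq : (n : ℝ) / 2 < q) (hC₀ : 0 < C₀) (hV : ReverseHolder n V q C₀) :
    ∃ C k₀ : ℝ, 0 < C ∧ 1 ≤ k₀ ∧ ∀ x y : En n,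
      C⁻¹ * critRad n V x * (1 + dist x y / critRad n V x) ^ (-k₀) ≤ critRad n V y ∧
      critRad n V y ≤ C * critRad n V x *
        (1 + dist x y / critRad n V x) ^ (k₀ / (k₀ + 1)) := by
  have hn3 : (3 : ℝ) ≤ n := by exact_mod_cast hn
  have hq1 : 1 < q := by linarith
  have hq0 : 0 < q := by linarith
  have hV0 := hV.1
  set F : En n → ℝ → ℝ := fun x r => ∫ y in ball x r, V y with hF
  have hF0 : ∀ x r, 0 ≤ F x r := fun x r => integral_nonneg fun y => hV0 y
  have hmono : ∀ x y r s, dist x y + r ≤ s → F x r ≤ F y s := by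
    intro x y r s h
    apply setIntegral_mono_set (integrableOn_ball hq1 hV y s) (Eventually.of_forall hV0)
    exact (ball_subset_ball' (by linarith)).eventuallyLE
  by_cases hpos : ∃ x, ∃ r, 0 < r ∧ 0 < F x r
  swap
  · push Not at hpos
    have hz : ∀ x, critRad n V x = 0 := by
      intro x
      apply Real.sSup_of_not_bddAbove
      rintro ⟨M, hM⟩
      have hr : 0 < |M| + 1 := by positivity
      have := hM (show |M| + 1 ∈ _ from ⟨hr, by
        have h1 : F x (|M| + 1) = 0 := le_antisymm (hpos x _ hr) (hF0 _ _)
        simp only [hF] at h1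
        rw [h1]; simp⟩)
      have := le_abs_self M
      linarith
    exact ⟨1, 1, by norm_num, le_rfl, fun x y => by simp [hz]⟩
  set β := volume.real (ball (0 : En n) 1) with hβ
  have hβ0 : 0 < β := ENNReal.toReal_pos (measure_ball_pos _ _ one_pos).ne' measure_ball_lt_top.ne
  have he0 : 0 < 1 - 1 / q := by
    have : 1 / q < 1 := (div_lt_one hq0).2 hq1
    linarith
  have hdec : ∀ x r R, 0 < r → r ≤ R →
      r ^ (2 - (n : ℝ)) * F x r ≤ C₀ * (r / R) ^ (2 - n / q) * (R ^ (2 - (n : ℝ)) * F x R) := by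
    intro x r R hr hrR
    have hR : 0 < R := hr.trans_le hrR
    have h := subset_est hq1 hV x R hR (ball x r) (ball_subset_ball hrR)
    rw [vol_ball hn x r hr.le, vol_ball hn x R hR.le, mul_div_mul_right _ _ hβ0.ne', ← div_pow,
      ← Real.rpow_natCast, ← Real.rpow_mul (by positivity)] at h
    calc r ^ (2 - (n : ℝ)) * F x r
        ≤ r ^ (2 - (n : ℝ)) * (C₀ * (r / R) ^ ((n : ℝ) * (1 - 1 / q)) * F x R) := by gcongr
      _ = (r / R * R) ^ (2 - (n : ℝ)) * (C₀ * (r / R) ^ ((n : ℝ) * (1 - 1 / q)) * F x R) := by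
          rw [div_mul_cancel₀ _ hR.ne']
      _ = C₀ * ((r / R) ^ (2 - (n : ℝ)) * (r / R) ^ ((n : ℝ) * (1 - 1 / q))) *
            (R ^ (2 - (n : ℝ)) * F x R) := by
          rw [Real.mul_rpow (by positivity) hR.le]; ring
      _ = _ := by
          rw [← Real.rpow_add (by positivity)]
          congr 3
          ring
  obtain ⟨θ, hθ0, hθ1, hθ⟩ : ∃ θ : ℝ, 0 < θ ∧ θ < 1 ∧ C₀ * (1 - θ ^ n) ^ (1 - 1 / q) < 1 / 2 := by
    have hc : ContinuousAt (fun θ : ℝ => C₀ * (1 - θ ^ n) ^ (1 - 1 / q)) 1 := by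
      refine continuousAt_const.mul (ContinuousAt.rpow_const (by fun_prop) (Or.inr he0.le))
    have h1 : ∀ᶠ θ in nhds (1 : ℝ), C₀ * (1 - θ ^ n) ^ (1 - 1 / q) < 1 / 2 := by
      apply hc.eventually_lt continuousAt_const
      simp [Real.zero_rpow (by simpa using he0.ne' : 1 - q⁻¹ ≠ 0)]
    have h1' : ∀ᶠ θ in nhdsWithin (1 : ℝ) (Iio 1), C₀ * (1 - θ ^ n) ^ (1 - 1 / q) < 1 / 2 :=
      nhdsWithin_le_nhds h1
    have h2 : ∀ᶠ θ in nhdsWithin (1 : ℝ) (Iio 1), 0 < θ :=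
      nhdsWithin_le_nhds (lt_mem_nhds one_pos)
    obtain ⟨θ, ⟨ha, hb⟩, hc⟩ :=
      ((h1'.and h2).and self_mem_nhdsWithin).exists
    exact ⟨θ, hb, hc, ha⟩
  have hshell : ∀ x R, 0 < R → F x R ≤ 2 * F x (θ * R) := by
    intro x R hR
    have hθR : θ * R ≤ R := by nlinarith
    have hsub : ball x (θ * R) ⊆ ball x R := ball_subset_ball hθR
    have h := subset_est hq1 hV x R hR (ball x R \ ball x (θ * R)) sdiff_subset
    have hd : ∫ y in ball x R \ ball x (θ * R), V y = F x R - F x (θ * R) :=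
      setIntegral_sdiff measurableSet_ball (integrableOn_ball hq1 hV x R) hsub
    have hv : volume.real (ball x R \ ball x (θ * R)) / volume.real (ball x R) = 1 - θ ^ n := by
      rw [measureReal_sdiff hsub measurableSet_ball, vol_ball hn x R hR.le,
        vol_ball hn x (θ * R) (by positivity), mul_pow, ← hβ]
      field_simp
    rw [hd, hv] at h
    have h2 : C₀ * (1 - θ ^ n) ^ (1 - 1 / q) * F x R ≤ 1 / 2 * F x R :=
      mul_le_mul_of_nonneg_right hθ.le (hF0 x R)
    change _ ≤ C₀ * (1 - θ ^ n) ^ (1 - 1 / q) * F x R at h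
    linarith
  have hl : 0 < Real.log θ⁻¹ := Real.log_pos ((one_lt_inv₀ hθ0).2 hθ1)
  have hl2 : 0 < Real.log 2 := Real.log_pos (by norm_num)
  apply abstract_main F (critRad n V) (2 - (n : ℝ)) (2 - n / q) (Real.log 2 / Real.log θ⁻¹) C₀ 2
    (by linarith) _ (by positivity) hC₀ two_pos hF0 hmono hdec _ (fun x => rfl) hpos
  · have : (n : ℝ) / q < 2 := by rw [div_lt_iff₀ hq0]; linarith
    linarith
  · intro x r R hr hrR
    exact growth_of_shell (F x) θ hθ0 hθ1 (hF0 x)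
      (fun a b hab => hmono _ _ _ _ (by simpa using hab)) (hshell x) r R hr hrR
end
end

section
/- Suppose n ≥ 3 and V ∈ B_q for some q > n/2. Then there exist constants c > 0 and C ≥ 1 such that whenever x, y ∈ ℝⁿ satisfy |x − y| ≤ c ρ(x), one has C⁻¹ ρ(x) ≤ ρ(y) ≤ C ρ(x). -/
open MeasureTheory Metric Set Filter

noncomputable section

lemma rh_memLp {n : ℕ} {V : En n → ℝ} {q : ℝ} (hq0 : 0 < q) (h0 : ∀ x, 0 ≤ V x)
    {x : En n} {r : ℝ} (hi : IntegrableOn (fun y => V y ^ q) (ball x r) volume) :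
    MemLp V (ENNReal.ofReal q) (volume.restrict (ball x r)) := by
  have hm : AEStronglyMeasurable V (volume.restrict (ball x r)) := by
    have h1 : AEMeasurable (fun y => (V y ^ q) ^ (1 / q)) (volume.restrict (ball x r)) :=
      hi.aestronglyMeasurable.aemeasurable.pow_const _
    have h2 : (fun y => (V y ^ q) ^ (1 / q)) = V := by
      funext y
      rw [← Real.rpow_mul (h0 y), mul_one_div_cancel hq0.ne', Real.rpow_one]
    rw [h2] at h1
    exact h1.aestronglyMeasurable
  rw [← integrable_norm_rpow_iff hm (by simpa using hq0) (by simp)]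
  rw [ENNReal.toReal_ofReal hq0.le]
  have h3 : (fun y => ‖V y‖ ^ q) = fun y => V y ^ q := by
    funext y; rw [Real.norm_of_nonneg (h0 y)]
  rw [h3]; exact hi

lemma rh_scale {n : ℕ} {V : En n → ℝ} {q C₀ : ℝ} (hq1 : 1 < q)
    (hV : ReverseHolder n V q C₀) (x : En n) {r t : ℝ} (hr : 0 < r) (ht : 0 < t) (ht1 : t ≤ 1) :
    ∫ y in ball x (t * r), V y ≤ C₀ * t ^ ((n : ℝ) * (1 - 1 / q)) * ∫ y in ball x r, V y := by
  obtain ⟨h0, -, hi, hrh⟩ := hV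
  have hq0 : 0 < q := by linarith
  have hR := hrh x r hr
  have htr : 0 < t * r := mul_pos ht hr
  have hsub : ball x (t * r) ⊆ ball x r := ball_subset_ball (by nlinarith)
  set m := (volume (ball x r)).toReal with hm
  have hm0 : 0 < m := ENNReal.toReal_pos (measure_ball_pos _ _ hr).ne' measure_ball_lt_top.ne
  have hms : (volume (ball x (t * r))).toReal = t ^ (n : ℝ) * m := by
    rw [Measure.addHaar_ball_mul_of_pos _ _ ht, ENNReal.toReal_mul,
      ENNReal.toReal_ofReal (by positivity), hm, Measure.addHaar_ball_center volume x r]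
    simp
  set I := ∫ y in ball x r, V y with hI
  set J := ∫ y in ball x r, V y ^ q with hJ
  have hI0 : 0 ≤ I := integral_nonneg h0
  have hJ0 : 0 ≤ J := integral_nonneg fun y => Real.rpow_nonneg (h0 y) _
  have hJs : ∫ y in ball x (t * r), V y ^ q ≤ J :=
    setIntegral_mono_set (hi x r hr)
      (Eventually.of_forall fun y => Real.rpow_nonneg (h0 y) _) hsub.eventuallyLE
  have hJs0 : 0 ≤ ∫ y in ball x (t * r), V y ^ q :=
    integral_nonneg fun y => Real.rpow_nonneg (h0 y) _
  have hconj : q.HolderConjugate (q.conjExponent) := Real.HolderConjugate.conjExponent hq1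
  have hce : 1 / q.conjExponent = 1 - 1 / q := by
    have := hconj.inv_add_inv_eq_one
    simp only [one_div]; linarith
  haveI : IsFiniteMeasure (volume.restrict (ball x (t * r))) :=
    ⟨by simpa using measure_ball_lt_top⟩
  have hH := integral_mul_le_Lp_mul_Lq_of_nonneg (μ := volume.restrict (ball x (t * r))) hconj
    (f := V) (g := fun _ => (1 : ℝ)) (Eventually.of_forall h0)
    (Eventually.of_forall fun _ => zero_le_one) (rh_memLp hq0 h0 (hi x _ htr)) (memLp_const 1)
  simp only [mul_one, Real.one_rpow, integral_const, smul_eq_mul, hce, measureReal_def,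
    Measure.restrict_apply_univ, hms] at hH
  set e := 1 - 1 / q with he
  have h4 : J ^ (1 / q) ≤ C₀ * (m ^ (-e) * I) := by
    rw [Real.mul_rpow (by positivity) hJ0, Real.inv_rpow hm0.le, ← Real.rpow_neg hm0.le] at hR
    have h5 := mul_le_mul_of_nonneg_left hR (Real.rpow_nonneg hm0.le (1 / q))
    rw [← mul_assoc, ← Real.rpow_add hm0] at h5
    have h6 : m ^ (-e) = m ^ (1 / q) * m⁻¹ := by
      rw [← Real.rpow_neg_one m, ← Real.rpow_add hm0]; congr 1; rw [he]; ring
    rw [h6]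
    simp only [add_neg_cancel, Real.rpow_zero, one_mul] at h5
    linarith
  calc _ ≤ _ := hH
    _ ≤ (C₀ * (m ^ (-e) * I)) * (t ^ (n : ℝ) * m) ^ e := by
      gcongr
      exact (Real.rpow_le_rpow hJs0 hJs (by positivity)).trans h4
    _ = C₀ * t ^ ((n : ℝ) * e) * I := by
      rw [Real.mul_rpow (by positivity) hm0.le, ← Real.rpow_mul ht.le, Real.rpow_neg hm0.le]
      have : m ^ e ≠ 0 := (Real.rpow_pos_of_pos hm0 _).ne'
      field_simp

theorem stmt_1 (n : ℕ) (hn : 3 ≤ n) (V : En n → ℝ) (q C₀ : ℝ)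
    (hq : (n : ℝ) / 2 < q) (hC₀ : 0 < C₀) (hV : ReverseHolder n V q C₀) :
    ∃ c C : ℝ, 0 < c ∧ 1 ≤ C ∧ ∀ x y : En n, dist x y ≤ c * critRad n V x →
      C⁻¹ * critRad n V x ≤ critRad n V y ∧ critRad n V y ≤ C * critRad n V x := by
  have hn' : (3 : ℝ) ≤ n := by exact_mod_cast hn
  have hq1 : 1 < q := by linarith
  have hq0 : 0 < q := by linarith
  have h0 := hV.1
  have hint : ∀ (x : En n) (r : ℝ), 0 < r → IntegrableOn V (ball x r) volume := by
    intro x r hr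
    haveI : IsFiniteMeasure (volume.restrict (ball x r)) :=
      ⟨by simpa using measure_ball_lt_top⟩
    exact (rh_memLp hq0 h0 (hV.2.2.1 x r hr)).integrable (by simpa using hq1.le)
  set d : ℝ := 2 - n / q with hd
  have hd0 : 0 < d := by
    have : (n : ℝ) / q < 2 := by rw [div_lt_iff₀ hq0]; linarith
    linarith
  -- choice of the scaling factor
  obtain ⟨t, ht, ht1, htC⟩ : ∃ t : ℝ, 0 < t ∧ t ≤ 1 ∧
      C₀ * t ^ d * (1 / 2 : ℝ) ^ (2 - (n : ℝ)) ≤ 1 := by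
    set K := C₀ * (1 / 2 : ℝ) ^ (2 - (n : ℝ)) with hK
    have hK0 : 0 < K := by positivity
    refine ⟨min 1 (K⁻¹ ^ (1 / d)), by positivity, min_le_left _ _, ?_⟩
    have h1 : (min 1 (K⁻¹ ^ (1 / d))) ^ d ≤ K⁻¹ := by
      calc _ ≤ (K⁻¹ ^ (1 / d)) ^ d :=
            Real.rpow_le_rpow (by positivity) (min_le_right _ _) hd0.le
        _ = K⁻¹ := by
            rw [← Real.rpow_mul (by positivity), one_div_mul_cancel hd0.ne', Real.rpow_one]
    calc _ = K * (min 1 (K⁻¹ ^ (1 / d))) ^ d := by rw [hK]; ring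
      _ ≤ K * K⁻¹ := by gcongr
      _ = 1 := mul_inv_cancel₀ hK0.ne'
  have step : ∀ (x y : En n) (r : ℝ),
      (0 < r ∧ r ^ (2 - (n : ℝ)) * ∫ z in ball x r, V z ≤ 1) → dist x y ≤ r / 2 →
      (0 < t * (r / 2) ∧
        (t * (r / 2)) ^ (2 - (n : ℝ)) * ∫ z in ball y (t * (r / 2)), V z ≤ 1) := by
    rintro x y r ⟨hr, hle⟩ hxy
    have hr2 : 0 < r / 2 := by positivity
    refine ⟨by positivity, ?_⟩
    have hs := rh_scale hq1 hV y hr2 ht ht1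
    have hsub : ball y (r / 2) ⊆ ball x r := by
      apply ball_subset_ball'
      rw [dist_comm]; linarith
    have hmono : ∫ z in ball y (r / 2), V z ≤ ∫ z in ball x r, V z :=
      setIntegral_mono_set (hint x r hr) (Eventually.of_forall h0) hsub.eventuallyLE
    have hexp : t ^ (2 - (n : ℝ)) * t ^ ((n : ℝ) * (1 - 1 / q)) = t ^ d := by
      rw [← Real.rpow_add ht]; congr 1; rw [hd]; ring
    calc _ ≤ (t * (r / 2)) ^ (2 - (n : ℝ)) *
          (C₀ * t ^ ((n : ℝ) * (1 - 1 / q)) * ∫ z in ball x r, V z) := by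
          gcongr
          exact hs.trans (by gcongr)
      _ = (C₀ * t ^ d * (1 / 2 : ℝ) ^ (2 - (n : ℝ))) *
          (r ^ (2 - (n : ℝ)) * ∫ z in ball x r, V z) := by
          rw [← hexp, Real.mul_rpow ht.le hr2.le, div_eq_mul_one_div r 2,
            Real.mul_rpow hr.le (by norm_num)]
          ring
      _ ≤ 1 * 1 := by
          gcongr
          exact mul_nonneg (by positivity) (integral_nonneg h0)
      _ = 1 := one_mul 1
  have hnn : ∀ x, 0 ≤ critRad n V x := fun x => Real.sSup_nonneg fun r hr => hr.1.le
  refine ⟨1 / 4, 4 / t, by norm_num, by rw [le_div_iff₀ ht]; linarith, ?_⟩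
  intro x y hxy
  rcases (hnn x).eq_or_lt with hz | hpos
  · rw [← hz] at hxy ⊢
    have : x = y := dist_le_zero.1 (by simpa using hxy)
    subst this
    rw [← hz]; simp
  · have hbx : BddAbove {r : ℝ | 0 < r ∧ r ^ (2 - (n : ℝ)) * ∫ z in ball x r, V z ≤ 1} := by
      by_contra h
      exact hpos.ne' (Real.sSup_of_not_bddAbove h)
    have hnx : {r : ℝ | 0 < r ∧ r ^ (2 - (n : ℝ)) * ∫ z in ball x r, V z ≤ 1}.Nonempty := by
      by_contra h
      rw [Set.not_nonempty_iff_eq_empty] at h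
      refine hpos.ne' ?_
      unfold critRad
      rw [h, Real.sSup_empty]
    obtain ⟨r0, hr0, hr0'⟩ := exists_lt_of_lt_csSup hnx
      (show critRad n V x / 2 < sSup _ from half_lt_self hpos)
    have hy := step x y r0 hr0 (by linarith)
    have hub : ∀ r ∈ {r : ℝ | 0 < r ∧ r ^ (2 - (n : ℝ)) * ∫ z in ball y r, V z ≤ 1},
        r ≤ 4 / t * critRad n V x := by
      intro r hr
      rw [div_mul_eq_mul_div, le_div_iff₀ ht]
      rcases le_or_gt (dist y x) (r / 2) with h | h
      · have := le_csSup hbx (step y x r hr h)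
        change _ ≤ critRad n V x at this
        linarith
      · rw [dist_comm] at h
        have : 0 < r := hr.1
        nlinarith
    refine ⟨?_, csSup_le ⟨_, hy⟩ hub⟩
    have h1 : t * (r0 / 2) ≤ critRad n V y := le_csSup ⟨_, hub⟩ hy
    rw [inv_div, div_mul_eq_mul_div, div_le_iff₀ (by norm_num)]
    nlinarith
end
end
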